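/- Let K be a field of characteristic zero, let n be an odd positive integer, and let ζ ∈ K be a primitive n-th root of unity. Then in the polynomial ring K[X,Y] one has the factorization D_n(X) − D_n(Y) = (X − Y) · ∏_{i=1}^{(n−1)/2} ( X² − (ζ^i + ζ^{−i})·X·Y + Y² + (ζ^i − ζ^{−i})² ). -/

import Mathlib

/-!
Over an algebraically closed field write `x = u + u⁻¹` and `y = v + v⁻¹`. Then
`D_n(x) - D_n(y) = u⁻ⁿ (uⁿ - vⁿ) (uⁿ - v⁻ⁿ)`, and both differences of `n`-th powers split over
the `n`-th roots of unity `w`. Multiplying the factor `u - w v` of the first by the factor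
`u - w⁻¹ v⁻¹` of the second gives `u (x - (w v + w⁻¹ v⁻¹))`, so
`D_n(x) - D_n(y) = ∏_w (x - (w v + w⁻¹ v⁻¹))` (`dickson_eval_sub_eval`). For odd `n` the root
`w = 1` contributes `x - y`, and each remaining pair `w, w⁻¹` contributes one of the quadratic
factors (`prod_range_odd_pow`). The polynomial identity follows by evaluating at all points of
`K × K` (which is Zariski dense in the plane, `K` being infinite) and passing to an algebraic
closure.
-/

/-- If `ζ ^ (2 * m + 1) = 1`, then `ζ ^ (2 * m + 1 - i) = ζ⁻¹ ^ i`, so apart from `ζ ^ 0 = 1` the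
powers of `ζ` in the product group into `m` inverse pairs. -/
lemma prod_range_odd_pow {L M : Type*} [Field L] [CommMonoid M] (m : ℕ) (ζ : L)
    (hζ : ζ ^ (2 * m + 1) = 1) (f : L → M) :
    ∏ i ∈ Finset.range (2 * m + 1), f (ζ ^ i)
      = f 1 * ∏ i ∈ Finset.Icc 1 m, f (ζ ^ i) * f (ζ⁻¹ ^ i) := by
  rw [Finset.prod_range_succ', two_mul, Finset.prod_range_add,
    ← Finset.prod_range_reflect (fun i => f (ζ ^ (m + i + 1))), ← Finset.prod_mul_distrib,
    pow_zero, mul_comm, Finset.range_eq_Ico, ← Finset.Ico_succ_right_eq_Icc]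
  simp only [Order.succ_eq_add_one]
  rw [← Finset.prod_Ico_add' (fun i => f (ζ ^ i) * f (ζ⁻¹ ^ i)) 0 m 1]
  congr 1
  refine Finset.prod_congr rfl fun i hi => ?_
  have him : i < m := (Finset.mem_Ico.mp hi).2
  congr 2
  rw [inv_pow]
  refine eq_inv_of_mul_eq_one_left ?_
  rw [← pow_add, ← hζ]
  congr 1
  omega

/-- The splitting of `D_n(x) - D_n(y)` into factors linear in `x`, where `x = u + u⁻¹` and
`y = v + v⁻¹`: one factor for each `n`-th root of unity. -/
lemma dickson_eval_sub_eval {L : Type*} [Field L] {n : ℕ} (hpos : 0 < n) {ζ u v : L}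
    (hζ : IsPrimitiveRoot ζ n) (hu : u ≠ 0) (hv : v ≠ 0) :
    (Polynomial.dickson 1 (1 : L) n).eval (u + u⁻¹)
        - (Polynomial.dickson 1 (1 : L) n).eval (v + v⁻¹)
      = ∏ i ∈ Finset.range n, (u + u⁻¹ - (ζ ^ i * v + (ζ ^ i)⁻¹ * v⁻¹)) := by
  have key {ξ : L} (hξ : IsPrimitiveRoot ξ n) (t : L) :
      u ^ n - t ^ n = ∏ i ∈ Finset.range n, (u - ξ ^ i * t) := by
    simpa [Polynomial.eval_prod] using
      congrArg (Polynomial.eval u) (X_pow_sub_C_eq_prod hξ hpos (rfl : t ^ n = t ^ n))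
  have hζ0 : ζ ≠ 0 := hζ.ne_zero hpos.ne'
  have hfac : ∀ i ∈ Finset.range n, u + u⁻¹ - (ζ ^ i * v + (ζ ^ i)⁻¹ * v⁻¹)
      = u⁻¹ * ((u - ζ ^ i * v) * (u - ζ⁻¹ ^ i * v⁻¹)) := by
    intro i _
    rw [inv_pow]
    have : ζ ^ i ≠ 0 := pow_ne_zero _ hζ0
    field_simp
    ring
  rw [Finset.prod_congr rfl hfac, Finset.prod_mul_distrib, Finset.prod_mul_distrib, ← key hζ,
    ← key hζ.inv, Finset.prod_const, Finset.card_range,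
    Polynomial.dickson_one_one_eval_add_inv _ _ (mul_inv_cancel₀ hu),
    Polynomial.dickson_one_one_eval_add_inv _ _ (mul_inv_cancel₀ hv)]
  simp only [inv_pow]
  have := pow_ne_zero n hu
  have := pow_ne_zero n hv
  field_simp
  ring

lemma exists_eq_add_inv {L : Type*} [Field L] [IsAlgClosed L] (x : L) :
    ∃ u : L, u ≠ 0 ∧ x = u + u⁻¹ := by
  have hdeg : (Polynomial.X ^ 2 - Polynomial.C x * Polynomial.X + 1 : Polynomial L).degree = 2 := by
    compute_degree!
  obtain ⟨u, hu⟩ := IsAlgClosed.exists_root _ (by rw [hdeg]; decide)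
  simp only [Polynomial.IsRoot, Polynomial.eval_add, Polynomial.eval_sub, Polynomial.eval_mul,
    Polynomial.eval_pow, Polynomial.eval_X, Polynomial.eval_C, Polynomial.eval_one] at hu
  have hu0 : u ≠ 0 := by
    rintro rfl
    simp at hu
  refine ⟨u, hu0, ?_⟩
  field_simp
  linear_combination -hu

/-- The factorization at a point, over an algebraically closed field. -/
lemma dickson_eval_factorization {L : Type*} [Field L] [IsAlgClosed L] {m : ℕ} {ζ : L}
    (hζ : IsPrimitiveRoot ζ (2 * m + 1)) (x y : L) :
    (Polynomial.dickson 1 (1 : L) (2 * m + 1)).eval x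
        - (Polynomial.dickson 1 (1 : L) (2 * m + 1)).eval y
      = (x - y) * ∏ i ∈ Finset.Icc 1 m,
          (x ^ 2 - (ζ ^ i + ζ⁻¹ ^ i) * x * y + y ^ 2 + (ζ ^ i - ζ⁻¹ ^ i) ^ 2) := by
  obtain ⟨u, hu, rfl⟩ := exists_eq_add_inv x
  obtain ⟨v, hv, rfl⟩ := exists_eq_add_inv y
  rw [dickson_eval_sub_eval (by omega) hζ hu hv,
    prod_range_odd_pow m ζ hζ.pow_eq_one (fun w => u + u⁻¹ - (w * v + w⁻¹ * v⁻¹))]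
  simp only [inv_one, one_mul]
  congr 1
  refine Finset.prod_congr rfl fun i _ => ?_
  have hw : ζ ^ i ≠ 0 := pow_ne_zero _ (hζ.ne_zero (by omega))
  -- `u + u⁻¹` may be any `x`: the identity is quadratic in `x` and uses only `w w⁻¹ = v v⁻¹ = 1`.
  generalize u + u⁻¹ = x
  rw [inv_pow, inv_inv]
  field_simp
  ring


/-- Let `K` be a field of characteristic zero, `n` an odd positive
integer, and `ζ ∈ K` a primitive `n`-th root of unity.  Then in `K[X,Y]` one has
`Dₙ(X) − Dₙ(Y) = (X − Y) · ∏_{i=1}^{(n−1)/2} (X² − (ζ^i + ζ^{−i})XY + Y² + (ζ^i − ζ^{−i})²)`,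
where `Dₙ = Polynomial.dickson 1 (1 : K) n` is the `n`-th Dickson polynomial of the first
kind with parameter 1. -/
theorem dickson_sub_dickson_factorization
    {K : Type*} [Field K] [CharZero K] (n : ℕ) (hn : Odd n) (hpos : 0 < n)
    (ζ : K) (hζ : IsPrimitiveRoot ζ n) :
    Polynomial.aeval (MvPolynomial.X 0 : MvPolynomial (Fin 2) K) (Polynomial.dickson 1 (1 : K) n)
      - Polynomial.aeval (MvPolynomial.X 1 : MvPolynomial (Fin 2) K) (Polynomial.dickson 1 (1 : K) n)
    = (MvPolynomial.X 0 - MvPolynomial.X 1) *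
        ∏ i ∈ Finset.Icc 1 ((n - 1) / 2),
          (MvPolynomial.X 0 ^ 2
            - MvPolynomial.C (ζ ^ i + ζ⁻¹ ^ i) * MvPolynomial.X 0 * MvPolynomial.X 1
            + MvPolynomial.X 1 ^ 2
            + MvPolynomial.C ((ζ ^ i - ζ⁻¹ ^ i) ^ 2)) := by
  obtain ⟨m, rfl⟩ := hn
  rw [show (2 * m + 1 - 1) / 2 = m by omega]
  refine MvPolynomial.funext fun p => ?_
  let φ := algebraMap K (AlgebraicClosure K)
  apply φ.injective
  have hev (q : Polynomial K) (i : Fin 2) :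
      MvPolynomial.eval p (Polynomial.aeval (MvPolynomial.X i : MvPolynomial (Fin 2) K) q)
        = q.eval (p i) := by
    rw [Polynomial.aeval_def, Polynomial.hom_eval₂, MvPolynomial.algebraMap_eq,
      show (MvPolynomial.eval p).comp MvPolynomial.C = RingHom.id K by ext; simp,
      MvPolynomial.eval_X, Polynomial.eval₂_id]
  have hφ (a : K) : φ ((Polynomial.dickson 1 (1 : K) (2 * m + 1)).eval a)
      = (Polynomial.dickson 1 (1 : AlgebraicClosure K) (2 * m + 1)).eval (φ a) := by
    rw [← map_one φ, ← Polynomial.map_dickson, Polynomial.eval_map_apply]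
  have h := dickson_eval_factorization (hζ.map_of_injective φ.injective) (φ (p 0)) (φ (p 1))
  simpa [hev, hφ] using h
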